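/- arXiv:2107.04276 — 2 statements merged into one kernel-verified Lean document; each statement's English description precedes it below -/
import Mathlib

section
/- Let L = E W Eᵀ be the weighted Laplacian of a connected undirected graph G whose nominal edge weights are w_ij = p_ij(θ_ij) > 0 for decoding functions p_ij : ℝ → ℝ that are concave, differentiable, and Lipschitz with |p_ij′(η)| ≤ K_ij for all η, with K_uv > 0 for a fixed edge (u,v) ∈ E. Consider the single-edge attack that replaces the weight of (u,v) by p_uv(θ_uv + δ) while leaving all other weights unchanged, i.e. the perturbed Laplacian L_Δ = L + (p_uv(θ_uv + δ) − p_uv(θ_uv)) b bᵀ with b = e_u − e_v. If |δ| ≤ (K_uv · R_uv(G))⁻¹, where R_uv(G) is the effective resistance between u and v in the nominal graph, then L_Δ is positive semidefinite, so the perturbed consensus protocol ẋ = −L_Δ x is stable; this holds independently of the value of the codeword θ_uv ∈ ℝ. -/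
open Matrix BigOperators

/-!
The perturbed quadratic form at `x` is `xᵀ L x + c (bᵀ x)²`, where `c` is the change of the weight.
Since `b = L y`, the Cauchy–Schwarz inequality for the form of `L` gives
`(bᵀ x)² = (yᵀ L x)² ≤ R · xᵀ L x` with `R = bᵀ y`, so the form stays nonnegative as long as
`-1 ≤ c R`. The Lipschitz bound `|c| ≤ K |δ|` guarantees this when `|δ| K R ≤ 1`.
-/

lemma dotProduct_add_smul_vecMulVec_self_mulVec {ι R : Type*} [Fintype ι] [CommSemiring R]
    (A : Matrix ι ι R) (c : R) (b x : ι → R) :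
    x ⬝ᵥ (A + c • vecMulVec b b) *ᵥ x = x ⬝ᵥ A *ᵥ x + c * (x ⬝ᵥ b) ^ 2 := by
  simp only [add_mulVec, smul_mulVec, vecMulVec_mulVec, dotProduct_add, dotProduct_smul,
    op_smul_eq_smul, smul_eq_mul, dotProduct_comm b x, sq]

lemma posSemidef_mul_diagonal_mul_transpose {ι κ R : Type*} [Finite ι] [Fintype κ]
    [DecidableEq κ] [CommRing R] [PartialOrder R] [StarRing R] [StarOrderedRing R] [TrivialStar R]
    (E : Matrix ι κ R) {w : κ → R} (hw : 0 ≤ w) :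
    (E * diagonal w * Eᵀ).PosSemidef := by
  simpa only [conjTranspose_eq_transpose_of_trivial] using
    (PosSemidef.diagonal hw).mul_mul_conjTranspose_same E

lemma dotProduct_nonneg_of_posSemidef_of_mulVec_eq {ι R : Type*} [Fintype ι] [CommRing R]
    [PartialOrder R] [StarRing R] [TrivialStar R] {A : Matrix ι ι R} (hA : A.PosSemidef)
    {b y : ι → R} (hy : A *ᵥ y = b) : 0 ≤ b ⬝ᵥ y := by
  simpa [hy, dotProduct_comm y b] using hA.dotProduct_mulVec_nonneg y

section LinearOrder

variable {ι R : Type*} [Fintype ι] [CommRing R] [LinearOrder R] [IsStrictOrderedRing R]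
  [StarRing R] [TrivialStar R] {A : Matrix ι ι R}

lemma sq_dotProduct_mulVec_le_of_posSemidef (hA : A.PosSemidef) (x y : ι → R) :
    (x ⬝ᵥ A *ᵥ y) ^ 2 ≤ (x ⬝ᵥ A *ᵥ x) * (y ⬝ᵥ A *ᵥ y) := by
  classical
  have nonneg (z : ι → R) : 0 ≤ A.toLinearMap₂' R z z := by
    simpa [toLinearMap₂'_apply'] using hA.dotProduct_mulVec_nonneg z
  have symm : (A.toLinearMap₂' R).IsSymm := ⟨fun z w ↦ by
    rw [RingHom.id_apply, toLinearMap₂'_apply', toLinearMap₂'_apply', dotProduct_mulVec,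
      ← mulVec_transpose, ← conjTranspose_eq_transpose_of_trivial, hA.isHermitian.eq,
      dotProduct_comm]⟩
  simpa only [toLinearMap₂'_apply'] using
    LinearMap.BilinForm.apply_sq_le_of_symm (A.toLinearMap₂' R) nonneg symm x y

lemma posSemidef_add_smul_vecMulVec_self (hA : A.PosSemidef) {b y : ι → R} (hy : A *ᵥ y = b)
    {c : R} (hc : -1 ≤ c * (b ⬝ᵥ y)) :
    (A + c • vecMulVec b b).PosSemidef := by
  refine .of_dotProduct_mulVec_nonneg ?_ fun x ↦ ?_
  · have hb : (vecMulVec b b).IsHermitian := by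
      simp [IsHermitian, conjTranspose_eq_transpose_of_trivial, transpose_vecMulVec]
    exact hA.isHermitian.add (hb.smul (.all c))
  · have form_nonneg : 0 ≤ x ⬝ᵥ A *ᵥ x := by simpa using hA.dotProduct_mulVec_nonneg x
    have cauchy_schwarz : (x ⬝ᵥ b) ^ 2 ≤ (x ⬝ᵥ A *ᵥ x) * (b ⬝ᵥ y) := by
      simpa only [hy, dotProduct_comm y b] using sq_dotProduct_mulVec_le_of_posSemidef hA x y
    rw [star_trivial, dotProduct_add_smul_vecMulVec_self_mulVec]
    obtain hc₀ | hc₀ := le_total 0 c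
    · positivity
    · calc
        0 ≤ (x ⬝ᵥ A *ᵥ x) * (1 + c * (b ⬝ᵥ y)) := mul_nonneg form_nonneg (by linarith)
        _ = x ⬝ᵥ A *ᵥ x + c * ((x ⬝ᵥ A *ᵥ x) * (b ⬝ᵥ y)) := by ring
        _ ≤ x ⬝ᵥ A *ᵥ x + c * (x ⬝ᵥ b) ^ 2 := by
          linarith [mul_le_mul_of_nonpos_left cauchy_schwarz hc₀]

end LinearOrder

theorem sbdc_codeword_single_edge_robustness_general {ι : Type*} [Fintype ι]
    {L : Matrix ι ι ℝ} (hL : L.PosSemidef) {b y : ι → ℝ} (hy : L *ᵥ y = b)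
    {p : ℝ → ℝ} {K : NNReal} (hp : LipschitzWith K p) (θ : ℝ)
    {δ : ℝ} (hδ : |δ| * (K * (b ⬝ᵥ y)) ≤ 1) :
    (L + (p (θ + δ) - p θ) • vecMulVec b b).PosSemidef := by
  have resistance_nonneg : 0 ≤ b ⬝ᵥ y := dotProduct_nonneg_of_posSemidef_of_mulVec_eq hL hy
  have weight_change : |p (θ + δ) - p θ| ≤ K * |δ| := by
    simpa [Real.dist_eq] using hp.dist_le_mul (θ + δ) θ
  refine posSemidef_add_smul_vecMulVec_self hL hy (neg_le_of_abs_le ?_)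
  calc
    |(p (θ + δ) - p θ) * (b ⬝ᵥ y)| = |p (θ + δ) - p θ| * (b ⬝ᵥ y) := by
      rw [abs_mul, abs_of_nonneg resistance_nonneg]
    _ ≤ K * |δ| * (b ⬝ᵥ y) := by gcongr
    _ = |δ| * (K * (b ⬝ᵥ y)) := by ring
    _ ≤ 1 := hδ

/-- **Theorem 1 of the paper.** For a connected weighted graph with
nominal weights `w_ij = p_ij(θ_ij) > 0` given by concave, differentiable, `K`-Lipschitz
decoding functions, a single-edge codeword attack `δ` on edge `(u,v)` with
`|δ| ≤ (K_uv · R_uv(G))⁻¹` leaves the perturbed Laplacian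
`L + (p_uv(θ_uv+δ) - p_uv(θ_uv)) b bᵀ` positive semidefinite, independently of the
codeword `θ_uv`. -/
theorem sbdc_codeword_single_edge_robustness
    {n m : ℕ} (Em : Matrix (Fin n) (Fin m) ℝ) (w : Fin m → ℝ)
    (hw : ∀ k, 0 < w k)
    (hinc : ∀ k : Fin m, ∃ i j : Fin n, i ≠ j ∧
      ∀ l, Em l k = (if l = i then (1 : ℝ) else 0) - (if l = j then 1 else 0))
    (L : Matrix (Fin n) (Fin n) ℝ)
    (hL : L = Em * Matrix.diagonal w * Em.transpose)
    -- connectivity: the kernel of `L` is exactly the span of the all-ones vector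
    (hker : ∀ x : Fin n → ℝ, L.mulVec x = 0 ↔ ∃ c : ℝ, x = fun _ => c)
    (u v : Fin n) (huv : u ≠ v)
    (b : Fin n → ℝ)
    (hb : b = fun i => (if i = u then (1 : ℝ) else 0) - (if i = v then 1 else 0))
    -- decoding function of the edge `(u,v)`: concave, differentiable, Lipschitz
    (p : ℝ → ℝ) (K : ℝ) (hK : 0 < K)
    (hp_diff : Differentiable ℝ p)
    (hp_conc : ConcaveOn ℝ Set.univ p)
    (hp_lip : ∀ η : ℝ, |deriv p η| ≤ K)
    -- `(u,v)` is an edge of the graph, with nominal weight `w_uv = p (θ_uv)`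
    (θ : ℝ)
    (hedge : ∃ k : Fin m, ((∀ l, Em l k = b l) ∨ (∀ l, Em l k = -(b l))) ∧ w k = p θ)
    -- effective resistance between `u` and `v` in the nominal graph
    (y : Fin n → ℝ) (hy : L.mulVec y = b)
    (R : ℝ) (hR : R = b ⬝ᵥ y)
    (δ : ℝ) (hδ : |δ| ≤ (K * R)⁻¹) :
    (L + (p (θ + δ) - p θ) • Matrix.vecMulVec b b).PosSemidef := by
  subst hL hR
  lift K to NNReal using hK.le
  have laplacian_posSemidef := posSemidef_mul_diagonal_mul_transpose Em fun k ↦ (hw k).le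
  have lipschitz : LipschitzWith K p := lipschitzWith_of_nnnorm_deriv_le hp_diff hp_lip
  have resistance_nonneg := dotProduct_nonneg_of_posSemidef_of_mulVec_eq laplacian_posSemidef hy
  refine sbdc_codeword_single_edge_robustness_general laplacian_posSemidef hy lipschitz θ ?_
  exact (mul_le_mul_of_nonneg_right hδ (by positivity)).trans inv_mul_le_one
end

section
/- Let L₀ = E Eᵀ be the unweighted Laplacian of a connected graph G and let α, K_P, K_I > 0. Let G_P be the graph G with every edge weight equal to K_P, so its Laplacian is L_P = K_P L₀, and let R_uv(G_P) be the effective resistance between u and v in G_P. Let the decoding function p_uv for the K_P-subcodeword of a fixed edge (u,v) ∈ E be concave, differentiable, and Lipschitz with constant K_uv > 0, with nominal value p_uv(θ_uv) = K_P. If a single-edge injection attack δ (perturbing only this subcodeword, with all α- and K_I-subcodewords unperturbed) satisfies |δ| ≤ (K_uv · R_uv(G_P))⁻¹, then the perturbed PI-ACE update matrix M̄ = [[K_P L₀ + (p_uv(θ_uv+δ) − K_P) b bᵀ + α Iₙ, −K_I L₀],[K_I L₀, 0_{n×n}]], with b = e_u − e_v, has zero as a simple eigenvalue and all other eigenvalues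 with positive real part, i.e. the perturbed second-order estimator protocol is stable; this holds for all α, K_P, K_I > 0 and independently of the codeword value θ_uv. -/
open Matrix BigOperators

/-!
The PI estimator is a saddle-point matrix `M = [[A, -Bᴴ], [B, 0]]`: its off-diagonal part is
skew-Hermitian, so `re (w* M w) = re (x* A x)` for `w = (x, y)`. If `A` has positive Hermitian
part, an eigenvector with nonzero eigenvalue has `x ≠ 0`, which forces `0 < re μ`. Moreover
`ker M = 0 × ker Bᴴ` is orthogonal to `range M`, so the algebraic multiplicity of `0` is
`dim ker Bᴴ`.

It remains to keep `A = P + c b bᵀ + α` positive definite, where `P = K_P L`. If `P y = b` then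
`R = bᵀ y = yᵀ P y` is the effective resistance `bᵀ P† b`, whichever solution `y` is taken, and
Cauchy–Schwarz for the form of `P` gives `(bᵀ x)² ≤ R · xᵀ P x`. Hence `P + c b bᵀ` is positive
semidefinite as soon as `-1 ≤ c R`, and the Lipschitz bound `|c| ≤ K |δ|` does the rest.
-/

open scoped NNReal

lemma star_dotProduct_mulVec_eq_star {R m k : Type*} [NonUnitalSemiring R] [StarRing R]
    [Fintype m] [Fintype k] (B : Matrix k m R) (x : m → R) (y : k → R) :
    star y ⬝ᵥ B *ᵥ x = star (star x ⬝ᵥ Bᴴ *ᵥ y) := by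
  rw [dotProduct_mulVec, ← star_dotProduct_star, star_star, star_mulVec,
    conjTranspose_conjTranspose]

section SaddlePoint

variable {𝕜 m k : Type*} [RCLike 𝕜]

/-- A square matrix with positive definite Hermitian part, `A + Aᴴ > 0`, expressed through its
quadratic form. The matrix `A` itself need not be Hermitian. -/
def StrictlyAccretive [Fintype m] (A : Matrix m m 𝕜) : Prop :=
  ∀ x : m → 𝕜, x ≠ 0 → 0 < RCLike.re (star x ⬝ᵥ A *ᵥ x)

/-- The saddle-point matrix `[[A, -Bᴴ], [B, 0]]`. The PI-ACE update matrix is of this form, with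
`A` collecting the proportional terms and `B = K_I L₀` the integral ones. -/
def saddlePoint (A : Matrix m m 𝕜) (B : Matrix k m 𝕜) : Matrix (m ⊕ k) (m ⊕ k) 𝕜 :=
  fromBlocks A (-Bᴴ) B 0

variable [Fintype m] [Fintype k]

lemma saddlePoint_mulVec (A : Matrix m m 𝕜) (B : Matrix k m 𝕜) (x : m → 𝕜) (y : k → 𝕜) :
    saddlePoint A B *ᵥ Sum.elim x y = Sum.elim (A *ᵥ x - Bᴴ *ᵥ y) (B *ᵥ x) := by
  simp [saddlePoint, fromBlocks_mulVec, neg_mulVec, sub_eq_add_neg]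

lemma re_star_dotProduct_saddlePoint_mulVec (A : Matrix m m 𝕜) (B : Matrix k m 𝕜)
    (x : m → 𝕜) (y : k → 𝕜) :
    RCLike.re (star (Sum.elim x y) ⬝ᵥ saddlePoint A B *ᵥ Sum.elim x y) =
      RCLike.re (star x ⬝ᵥ A *ᵥ x) := by
  rw [saddlePoint_mulVec, Function.star_sumElim, sumElim_dotProduct_sumElim,
    star_dotProduct_mulVec_eq_star, dotProduct_sub]
  simp

variable {A : Matrix m m 𝕜} {B : Matrix k m 𝕜}

lemma saddlePoint_mulVec_eq_zero_iff (hA : StrictlyAccretive A) {x : m → 𝕜} {y : k → 𝕜} :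
    saddlePoint A B *ᵥ Sum.elim x y = 0 ↔ x = 0 ∧ Bᴴ *ᵥ y = 0 := by
  constructor
  · intro h
    have hx : x = 0 := by
      by_contra hx
      have hpos := hA x hx
      rw [← re_star_dotProduct_saddlePoint_mulVec A B x y, h, dotProduct_zero, map_zero] at hpos
      exact hpos.false
    subst hx
    refine ⟨rfl, ?_⟩
    simpa [saddlePoint_mulVec, funext_iff] using h
  · rintro ⟨rfl, hy⟩
    simp [saddlePoint_mulVec, hy]

open scoped ComplexOrder in
lemma saddlePoint_mulVec_eq_zero_of_sq (hA : StrictlyAccretive A) {w : m ⊕ k → 𝕜}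
    (hw : saddlePoint A B *ᵥ (saddlePoint A B *ᵥ w) = 0) : saddlePoint A B *ᵥ w = 0 := by
  obtain ⟨x, y, rfl⟩ : ∃ x y, w = Sum.elim x y := ⟨_, _, (Sum.elim_comp_inl_inr w).symm⟩
  rw [saddlePoint_mulVec] at hw ⊢
  obtain ⟨htop, hbot⟩ := (saddlePoint_mulVec_eq_zero_iff hA).1 hw
  have hBx : B *ᵥ x = 0 := by
    rw [← dotProduct_star_self_eq_zero, star_dotProduct_mulVec_eq_star, hbot, dotProduct_zero,
      star_zero]
  simp [htop, hBx]

lemma ker_saddlePoint (hA : StrictlyAccretive A) :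
    LinearMap.ker (saddlePoint A B).mulVecLin =
      ((⊥ : Submodule 𝕜 (m → 𝕜)).prod (LinearMap.ker Bᴴ.mulVecLin)).comap
        (LinearEquiv.sumArrowLequivProdArrow m k 𝕜 𝕜).toLinearMap := by
  ext w
  obtain ⟨x, y, rfl⟩ : ∃ x y, w = Sum.elim x y := ⟨_, _, (Sum.elim_comp_inl_inr w).symm⟩
  exact saddlePoint_mulVec_eq_zero_iff hA

lemma finrank_ker_saddlePoint (hA : StrictlyAccretive A) :
    Module.finrank 𝕜 (LinearMap.ker (saddlePoint A B).mulVecLin) =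
      Module.finrank 𝕜 (LinearMap.ker Bᴴ.mulVecLin) := by
  rw [ker_saddlePoint hA, Submodule.comap_equiv_eq_map_symm, LinearEquiv.finrank_map_eq,
    ← Submodule.map_inr]
  exact (Submodule.equivMapOfInjective _ LinearMap.inr_injective _).finrank_eq.symm

lemma maxGenEigenspace_zero_eq_ker {R V : Type*} [CommRing R] [AddCommGroup V] [Module R V]
    {f : Module.End R V} (hf : ∀ w, f (f w) = 0 → f w = 0) :
    f.maxGenEigenspace 0 = LinearMap.ker f := by
  ext w
  simp only [Module.End.mem_maxGenEigenspace, zero_smul, sub_zero, LinearMap.mem_ker]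
  constructor
  · rintro ⟨j, hj⟩
    induction j generalizing w with
    | zero => simp_all
    | succ j ih => exact hf w (ih (f w) (by simpa only [pow_succ, Module.End.mul_apply] using hj))
  · exact fun hw => ⟨1, by simpa only [pow_one] using hw⟩

theorem rootMultiplicity_zero_charpoly_saddlePoint [DecidableEq m] [DecidableEq k]
    (hA : StrictlyAccretive A) :
    (saddlePoint A B).charpoly.rootMultiplicity 0 =
      Module.finrank 𝕜 (LinearMap.ker Bᴴ.mulVecLin) := by
  have hsq (w : m ⊕ k → 𝕜) : toLin' (saddlePoint A B) (toLin' (saddlePoint A B) w) = 0 →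
      toLin' (saddlePoint A B) w = 0 := by
    simpa only [toLin'_apply] using saddlePoint_mulVec_eq_zero_of_sq hA
  rw [← charpoly_toLin', ← LinearMap.finrank_maxGenEigenspace_eq,
    maxGenEigenspace_zero_eq_ker hsq, toLin'_apply', finrank_ker_saddlePoint hA]

open scoped ComplexOrder in
theorem re_pos_of_hasEigenvalue_saddlePoint [DecidableEq m] [DecidableEq k]
    (hA : StrictlyAccretive A) {μ : 𝕜} (hμ : Module.End.HasEigenvalue (toLin' (saddlePoint A B)) μ)
    (hμ0 : μ ≠ 0) : 0 < RCLike.re μ := by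
  obtain ⟨w, hw⟩ := hμ.exists_hasEigenvector
  obtain ⟨x, y, rfl⟩ : ∃ x y, w = Sum.elim x y := ⟨_, _, (Sum.elim_comp_inl_inr w).symm⟩
  have hMw : saddlePoint A B *ᵥ Sum.elim x y = μ • Sum.elim x y := hw.apply_eq_smul
  have hx : x ≠ 0 := by
    rintro rfl
    have hy : y = 0 := by
      rw [saddlePoint_mulVec, mulVec_zero] at hMw
      ext i
      simpa [hμ0] using (congrFun hMw (Sum.inr i)).symm
    exact hw.2 (by simp [hy])
  have hpos := hA x hx
  rw [← re_star_dotProduct_saddlePoint_mulVec A B x y, hMw, dotProduct_smul, smul_eq_mul] at hpos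
  obtain ⟨hnorm, him⟩ := RCLike.nonneg_iff.1 (dotProduct_star_self_nonneg (Sum.elim x y))
  rw [RCLike.mul_re, him, mul_zero, sub_zero] at hpos
  exact pos_of_mul_pos_left hpos hnorm

end SaddlePoint

lemma rootMultiplicity_charpoly_map {R S m : Type*} [CommRing R] [CommRing S] [Fintype m]
    [DecidableEq m] {f : R →+* S} (hf : Function.Injective f) (M : Matrix m m R) (a : R) :
    (M.map f).charpoly.rootMultiplicity (f a) = M.charpoly.rootMultiplicity a := by
  rw [charpoly_map, Polynomial.eq_rootMultiplicity_map hf]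

lemma saddlePoint_map_algebraMap {m k : Type*} (A : Matrix m m ℝ)
    (B : Matrix k m ℝ) :
    (saddlePoint A B).map (algebraMap ℝ ℂ) =
      saddlePoint (A.map (algebraMap ℝ ℂ)) (B.map (algebraMap ℝ ℂ)) := by
  ext (i | i) (j | j) <;> simp [saddlePoint]

section Complexification

variable {m : Type*} [Fintype m]

lemma re_star_dotProduct_map_mulVec (A : Matrix m m ℝ) (z : m → ℂ) :
    (star z ⬝ᵥ A.map (algebraMap ℝ ℂ) *ᵥ z).re =
      (fun i => (z i).re) ⬝ᵥ A *ᵥ (fun i => (z i).re) +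
        (fun i => (z i).im) ⬝ᵥ A *ᵥ (fun i => (z i).im) := by
  simp [dotProduct, mulVec, ← Finset.sum_add_distrib]

lemma StrictlyAccretive.map_algebraMap {A : Matrix m m ℝ} (hA : StrictlyAccretive A) :
    StrictlyAccretive (A.map (algebraMap ℝ ℂ)) := by
  have hnonneg (x : m → ℝ) : 0 ≤ x ⬝ᵥ A *ᵥ x := by
    rcases eq_or_ne x 0 with rfl | hx
    · simp
    · exact (hA x hx).le
  intro z hz
  rw [RCLike.re_eq_complex_re, re_star_dotProduct_map_mulVec]
  by_cases hre : (fun i => (z i).re) = 0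
  · have him : (fun i => (z i).im) ≠ 0 := fun him =>
      hz (funext fun i => Complex.ext (congrFun hre i) (congrFun him i))
    exact add_pos_of_nonneg_of_pos (hnonneg _) (hA _ him)
  · exact add_pos_of_pos_of_nonneg (hA _ hre) (hnonneg _)

end Complexification

section RankOnePerturbation

variable {ι : Type*} [Fintype ι] {P : Matrix ι ι ℝ}

lemma dotProduct_mulVec_sq_le (hP : P.PosSemidef) (x y : ι → ℝ) :
    (x ⬝ᵥ P *ᵥ y) ^ 2 ≤ (x ⬝ᵥ P *ᵥ x) * (y ⬝ᵥ P *ᵥ y) := by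
  classical
  have hsymm : LinearMap.IsSymm (toBilin' P) := by
    refine ⟨fun x y => ?_⟩
    have hswap := star_dotProduct_mulVec_eq_star P y x
    rw [hP.isHermitian.eq] at hswap
    simpa [toBilin'_apply'] using hswap
  simpa [toBilin'_apply'] using LinearMap.BilinForm.apply_sq_le_of_symm (toBilin' P)
    (fun x => by simpa [toBilin'_apply'] using hP.dotProduct_mulVec_nonneg x) hsymm x y

lemma dotProduct_nonneg_of_mulVec_eq (hP : P.PosSemidef) {b y : ι → ℝ} (hy : P *ᵥ y = b) :
    0 ≤ b ⬝ᵥ y := by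
  simpa [hy, dotProduct_comm] using hP.dotProduct_mulVec_nonneg y

lemma dotProduct_sq_le_of_mulVec_eq (hP : P.PosSemidef) {b y : ι → ℝ} (hy : P *ᵥ y = b)
    (x : ι → ℝ) : (b ⬝ᵥ x) ^ 2 ≤ (b ⬝ᵥ y) * (x ⬝ᵥ P *ᵥ x) := by
  simpa [hy, dotProduct_comm, mul_comm] using dotProduct_mulVec_sq_le hP x y

theorem posSemidef_add_smul_vecMulVec (hP : P.PosSemidef) {b y : ι → ℝ} (hy : P *ᵥ y = b)
    {c : ℝ} (hc : -1 ≤ c * (b ⬝ᵥ y)) : (P + c • vecMulVec b b).PosSemidef := by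
  have hb : (vecMulVec b b).PosSemidef := by simpa using posSemidef_vecMulVec_self_star b
  refine .of_dotProduct_mulVec_nonneg (hP.isHermitian.add (hb.isHermitian.smul (.all c)))
    fun x => ?_
  have hquad : star x ⬝ᵥ (P + c • vecMulVec b b) *ᵥ x = x ⬝ᵥ P *ᵥ x + c * (b ⬝ᵥ x) ^ 2 := by
    simp [add_mulVec, smul_mulVec, vecMulVec_mulVec, dotProduct_comm x b, sq]
  rw [hquad]
  have hPx : 0 ≤ x ⬝ᵥ P *ᵥ x := hP.dotProduct_mulVec_nonneg x
  rcases le_total 0 c with hc0 | hc0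
  · positivity
  · have hCS := dotProduct_sq_le_of_mulVec_eq hP hy x
    calc 0 ≤ (1 + c * (b ⬝ᵥ y)) * (x ⬝ᵥ P *ᵥ x) := mul_nonneg (by linarith) hPx
      _ = x ⬝ᵥ P *ᵥ x + c * ((b ⬝ᵥ y) * (x ⬝ᵥ P *ᵥ x)) := by ring
      _ ≤ x ⬝ᵥ P *ᵥ x + c * (b ⬝ᵥ x) ^ 2 :=
        add_le_add_right (mul_le_mul_of_nonpos_left hCS hc0) _

lemma strictlyAccretive_add_smul_one [DecidableEq ι] (hP : P.PosSemidef) {α : ℝ} (hα : 0 < α) :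
    StrictlyAccretive (P + α • (1 : Matrix ι ι ℝ)) := fun _ hx =>
  ((PosDef.one.smul hα).posSemidef_add hP).re_dotProduct_pos hx

end RankOnePerturbation

lemma neg_one_le_sub_mul_of_lipschitzWith {p : ℝ → ℝ} {K : ℝ≥0} (hp : LipschitzWith K p)
    {θ δ R : ℝ} (hR : 0 ≤ R) (hδ : K * |δ| * R ≤ 1) : -1 ≤ (p (θ + δ) - p θ) * R := by
  have hdev : |p (θ + δ) - p θ| ≤ K * |δ| := by simpa using hp.norm_sub_le (θ + δ) θ
  refine (abs_le.1 ?_).1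
  rw [abs_mul, abs_of_nonneg hR]
  exact (mul_le_mul_of_nonneg_right hdev hR).trans hδ

lemma ker_smul_conjTranspose {ι : Type*} [Fintype ι] {L : Matrix ι ι ℝ}
    (hL : L.IsHermitian) {a : ℝ} (ha : a ≠ 0) :
    LinearMap.ker (a • L)ᴴ.mulVecLin = LinearMap.ker L.mulVecLin := by
  ext x
  rw [conjTranspose_smul, hL.eq, star_trivial]
  simp [ha]

lemma finrank_ker_mulVecLin_eq_one {ι : Type*} [Fintype ι] [Nonempty ι] {L : Matrix ι ι ℝ}
    (hker : ∀ x, L *ᵥ x = 0 ↔ ∃ c : ℝ, x = fun _ => c) :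
    Module.finrank ℝ (LinearMap.ker L.mulVecLin) = 1 := by
  have hspan : LinearMap.ker L.mulVecLin = Submodule.span ℝ {(1 : ι → ℝ)} := by
    ext x
    simp [hker, Submodule.mem_span_singleton, funext_iff, eq_comm]
  rw [hspan, finrank_span_singleton one_ne_zero]

lemma mul_abs_mul_le_one_of_abs_le_inv {K R δ : ℝ} (hδ : |δ| ≤ (K * R)⁻¹) : K * |δ| * R ≤ 1 := by
  have hKR : 0 ≤ K * R := inv_nonneg.1 ((abs_nonneg δ).trans hδ)
  calc K * |δ| * R = K * R * |δ| := by ring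
    _ ≤ K * R * (K * R)⁻¹ := by gcongr
    _ ≤ 1 := mul_inv_le_one

theorem piace_perturbed_KP_single_edge_stability_general
    {ι : Type*} [Fintype ι] [DecidableEq ι] {L : Matrix ι ι ℝ} (hL : L.PosSemidef)
    {α KP KI : ℝ} (hα : 0 < α) (hKP : 0 ≤ KP) (hKI : KI ≠ 0)
    {b y : ι → ℝ} (hy : (KP • L) *ᵥ y = b)
    {p : ℝ → ℝ} {K : ℝ≥0} (hp : LipschitzWith K p)
    {θ δ : ℝ} (hθ : p θ = KP) (hδ : K * |δ| * (b ⬝ᵥ y) ≤ 1)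
    {M : Matrix (ι ⊕ ι) (ι ⊕ ι) ℝ}
    (hM : M = fromBlocks
      (KP • L + (p (θ + δ) - KP) • vecMulVec b b + α • (1 : Matrix ι ι ℝ))
      (-(KI • L)) (KI • L) 0) :
    (M.map (algebraMap ℝ ℂ)).charpoly.rootMultiplicity 0 =
        Module.finrank ℝ (LinearMap.ker L.mulVecLin) ∧
      ∀ μ : ℂ, Module.End.HasEigenvalue (toLin' (M.map (algebraMap ℝ ℂ))) μ → μ ≠ 0 →
        0 < μ.re := by
  have hP : (KP • L).PosSemidef := hL.smul hKP
  have hc : -1 ≤ (p (θ + δ) - KP) * (b ⬝ᵥ y) :=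
    hθ ▸ neg_one_le_sub_mul_of_lipschitzWith hp (dotProduct_nonneg_of_mulVec_eq hP hy) hδ
  have hA := strictlyAccretive_add_smul_one (posSemidef_add_smul_vecMulVec hP hy hc) hα
  have hsaddle : M = saddlePoint
      (KP • L + (p (θ + δ) - KP) • vecMulVec b b + α • (1 : Matrix ι ι ℝ)) (KI • L) := by
    rw [hM, saddlePoint, conjTranspose_smul, hL.isHermitian.eq, star_trivial]
  rw [hsaddle]
  constructor
  · rw [← map_zero (algebraMap ℝ ℂ), rootMultiplicity_charpoly_map (algebraMap ℝ ℂ).injective,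
      rootMultiplicity_zero_charpoly_saddlePoint hA,
      ker_smul_conjTranspose hL.isHermitian hKI]
  · rw [saddlePoint_map_algebraMap]
    exact fun μ => re_pos_of_hasEigenvalue_saddlePoint hA.map_algebraMap

/-- **Corollary 1 of the paper.** For the unweighted Laplacian
`L₀ = E Eᵀ` of a connected graph, gains `α, K_P, K_I > 0`, and a concave,
differentiable, `K_uv`-Lipschitz decoding function `p_uv` with nominal value
`p_uv(θ_uv) = K_P`, a single-edge attack `δ` on the `K_P`-subcodeword of edge `(u,v)`
with `|δ| ≤ (K_uv · R_uv(G_P))⁻¹` (effective resistance in the uniformly `K_P`-weighted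
graph) leaves the perturbed PI-ACE update matrix with a simple zero eigenvalue and all
other eigenvalues in the open right half plane, for every codeword `θ_uv`. -/
theorem piace_perturbed_KP_single_edge_stability
    {n m : ℕ} (Em : Matrix (Fin n) (Fin m) ℝ)
    (hinc : ∀ k : Fin m, ∃ i j : Fin n, i ≠ j ∧
      ∀ l, Em l k = (if l = i then (1 : ℝ) else 0) - (if l = j then 1 else 0))
    (L0 : Matrix (Fin n) (Fin n) ℝ)
    (hL0 : L0 = Em * Em.transpose)
    -- connectivity: the kernel of `L₀` is exactly the span of the all-ones vector
    (hker : ∀ x : Fin n → ℝ, L0.mulVec x = 0 ↔ ∃ c : ℝ, x = fun _ => c)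
    (α KP KI : ℝ) (hα : 0 < α) (hKP : 0 < KP) (hKI : 0 < KI)
    (u v : Fin n) (huv : u ≠ v)
    (b : Fin n → ℝ)
    (hb : b = fun i => (if i = u then (1 : ℝ) else 0) - (if i = v then 1 else 0))
    -- `(u,v)` is an edge of the graph
    (hedge : ∃ k : Fin m, (∀ l, Em l k = b l) ∨ (∀ l, Em l k = -(b l)))
    -- decoding function of the `K_P`-subcodeword of edge `(u,v)`
    (p : ℝ → ℝ) (Kuv : ℝ) (hKuv : 0 < Kuv)
    (hp_diff : Differentiable ℝ p)
    (hp_conc : ConcaveOn ℝ Set.univ p)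
    (hp_lip : ∀ η : ℝ, |deriv p η| ≤ Kuv)
    (θ : ℝ) (hθ : p θ = KP)
    -- effective resistance between `u` and `v` in `G_P` (Laplacian `K_P L₀`)
    (y : Fin n → ℝ) (hy : (KP • L0).mulVec y = b)
    (R : ℝ) (hR : R = b ⬝ᵥ y)
    (δ : ℝ) (hδ : |δ| ≤ (Kuv * R)⁻¹)
    (Mbar : Matrix (Fin n ⊕ Fin n) (Fin n ⊕ Fin n) ℝ)
    (hMbar : Mbar = Matrix.fromBlocks
      (KP • L0 + (p (θ + δ) - KP) • Matrix.vecMulVec b b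
        + α • (1 : Matrix (Fin n) (Fin n) ℝ))
      (-(KI • L0)) (KI • L0) (0 : Matrix (Fin n) (Fin n) ℝ)) :
    (Matrix.charpoly (Mbar.map (algebraMap ℝ ℂ))).rootMultiplicity 0 = 1 ∧
      ∀ μ : ℂ, Module.End.HasEigenvalue
          (Matrix.toLin' (Mbar.map (algebraMap ℝ ℂ))) μ → μ ≠ 0 → 0 < μ.re := by
  subst hL0 hR
  have : Nonempty (Fin n) := ⟨u⟩
  have hL : (Em * Emᵀ).PosSemidef := by
    simpa using posSemidef_self_mul_conjTranspose Em
  have hp : LipschitzWith ⟨Kuv, hKuv.le⟩ p := lipschitzWith_of_nnnorm_deriv_le hp_diff hp_lip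
  rw [← finrank_ker_mulVecLin_eq_one hker]
  exact piace_perturbed_KP_single_edge_stability_general hL hα hKP.le hKI.ne' hy hp hθ
    (mul_abs_mul_le_one_of_abs_le_inv hδ) hMbar
end
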